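/- Assume M̄ ≥ 2D. Let m ∈ T with M_m = M̄ and M_k ∈ {M̄, a M̄} for all indices k up to m, and suppose condition (D) holds at every index k ∈ {m−1, m, m+1, m+2, m+3}. Then there exists m₀ ∈ {m+1, m+2, m+3} with m₀ ∈ T, M_{m₀} = M̄, and M_k ∈ {M̄, a M̄} for all k with m < k ≤ m₀; moreover no index strictly between m and m₀ belongs to T. -/

import Mathlib

/-!
The argument tracks the error `x (t_k) - y_k` relative to the sign `s = h_m`. The sign rule makes
`h_k * (x (t_k) - y_k)` nonnegative (`ADM.sign_mul_nonneg`), and at `m - 1`, where the sign is `-s`,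
this bounds the error just after the sign change: `s * (x (t_m) - y_m) ≤ (D + a M̄) δ`.
If neither `m + 1` nor `m + 2` lies in `T`, the next three steps all have sign `s` and sizes
`M̄, M̄, a M̄`, so `y` moves by `(2 + a) M̄ δ` in the direction `s`, while `x` moves by at most `3 D δ`.
Since `4 D ≤ 2 M̄`, the signal has been reached or overtaken at `m + 3`, which forces a sign change
there (`ADM.flip`). At the first sign change after `m`, the step size is `M̄` because the preceding
one is `M̄` or `a M̄`.
-/

noncomputable section

/-- Membership in the set `T = {k ≥ 1 : h_{k-1} h_k < 0}` of sign-change indices. -/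
def Tmem (h : ℤ → ℝ) (k : ℕ) : Prop := 1 ≤ k ∧ h ((k : ℤ) - 1) * h (k : ℤ) < 0

/-- The modified adaptive delta modulation system: sequences `h_k` (binary symbols,
indexed by `ℤ` so that `h (-1) = 1` makes sense), `y_k` (estimates at sample points)
and `M_k` (step sizes), driven by the sampled signal `x (k δ)`. -/
structure ADM (δ a Mbar M₀ y₀ : ℝ) (x : ℝ → ℝ) where
  h : ℤ → ℝ
  y : ℕ → ℝ
  M : ℕ → ℝ
  h_init : h (-1) = 1
  h_lt : ∀ k : ℕ, y k < x (k * δ) → h (k : ℤ) = 1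
  h_gt : ∀ k : ℕ, x (k * δ) < y k → h (k : ℤ) = -1
  h_eq : ∀ k : ℕ, y k = x (k * δ) → h (k : ℤ) = - h ((k : ℤ) - 1)
  y_zero : y 0 = y₀
  y_rec : ∀ k : ℕ, y (k + 1) = y k + h (k : ℤ) * M k * δ
  M_zero : M 0 = M₀
  M_pos : ∀ k : ℕ, 0 < M k
  M_rec_T : ∀ k : ℕ, Tmem h k → M k = max (a⁻¹ * M (k - 1)) Mbar
  M_rec_prev : ∀ k : ℕ, 1 ≤ k → ¬ Tmem h k → Tmem h (k - 1) → M k = M (k - 1)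
  M_rec_grow : ∀ k : ℕ, 1 ≤ k → ¬ Tmem h k → ¬ Tmem h (k - 1) → M k = a * M (k - 1)

/-- Condition (D) at index `k`: `sup_{t ∈ [t_k, t_{k+1}]} |x(t) − x(t_k)| ≤ D δ`. -/
def condD (δ D : ℝ) (x : ℝ → ℝ) (k : ℕ) : Prop :=
  ∀ t ∈ Set.Icc ((k : ℝ) * δ) (((k : ℝ) + 1) * δ), |x t - x ((k : ℝ) * δ)| ≤ D * δ

theorem tmem_succ (h : ℤ → ℝ) (k : ℕ) :
    Tmem h (k + 1) ↔ h (k : ℤ) * h ((k + 1 : ℕ) : ℤ) < 0 := by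
  simp [Tmem]

namespace ADM

variable {δ a Mbar M₀ y₀ : ℝ} {x : ℝ → ℝ} (S : ADM δ a Mbar M₀ y₀ x)

theorem h_pm (k : ℕ) : S.h (k : ℤ) = 1 ∨ S.h (k : ℤ) = -1 := by
  induction k with
  | zero =>
    rcases lt_trichotomy (S.y 0) (x ((0 : ℕ) * δ)) with h | h | h
    · exact Or.inl (S.h_lt 0 h)
    · right
      have := S.h_eq 0 h
      simpa [S.h_init] using this
    · exact Or.inr (S.h_gt 0 h)
  | succ k ih =>
    rcases lt_trichotomy (S.y (k + 1)) (x ((k + 1 : ℕ) * δ)) with h | h | h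
    · exact Or.inl (S.h_lt _ h)
    · have e := S.h_eq _ h
      have e1 : ((k + 1 : ℕ) : ℤ) - 1 = (k : ℤ) := by push_cast; ring
      rw [e1] at e
      rcases ih with h1 | h1 <;> rw [h1] at e
      · exact Or.inr e
      · left; rw [e]; norm_num
    · exact Or.inr (S.h_gt _ h)

theorem sign_mul_nonneg (k : ℕ) : 0 ≤ S.h (k : ℤ) * (x (k * δ) - S.y k) := by
  rcases lt_trichotomy (S.y k) (x (k * δ)) with h | h | h
  · rw [S.h_lt k h]; linarith
  · rw [h]; simp
  · rw [S.h_gt k h]; linarith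

/-- If the estimate has reached or overtaken the signal in its direction of motion, the sign
changes. The tie `y = x` is covered by the rule `h_eq`. -/
theorem flip (k : ℕ) (hk : S.h (k : ℤ) * (x ((k + 1 : ℕ) * δ) - S.y (k + 1)) ≤ 0) :
    Tmem S.h (k + 1) := by
  rw [tmem_succ]
  have e1 : ((k + 1 : ℕ) : ℤ) - 1 = (k : ℤ) := by push_cast; ring
  rcases lt_trichotomy (S.y (k + 1)) (x ((k + 1 : ℕ) * δ)) with h | h | h
  · rw [S.h_lt _ h]
    rcases S.h_pm k with h1 | h1 <;> rw [h1] at hk ⊢ <;> linarith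
  · rw [S.h_eq _ h, e1]
    rcases S.h_pm k with h1 | h1 <;> rw [h1] <;> norm_num
  · rw [S.h_gt _ h]
    rcases S.h_pm k with h1 | h1 <;> rw [h1] at hk ⊢ <;> linarith

theorem h_succ_of_tmem (k : ℕ) (hk : Tmem S.h (k + 1)) :
    S.h (k : ℤ) = -S.h ((k + 1 : ℕ) : ℤ) := by
  rw [tmem_succ] at hk
  rcases S.h_pm k with h1 | h1 <;> rcases S.h_pm (k + 1) with h2 | h2 <;>
    rw [h1, h2] at hk ⊢ <;> linarith

theorem h_succ_of_not_tmem (k : ℕ) (hk : ¬ Tmem S.h (k + 1)) :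
    S.h ((k + 1 : ℕ) : ℤ) = S.h (k : ℤ) := by
  rw [tmem_succ] at hk
  rcases S.h_pm k with h1 | h1 <;> rcases S.h_pm (k + 1) with h2 | h2 <;>
    rw [h1, h2] at hk ⊢ <;> linarith

theorem M_eq_of_tmem (ha : 1 < a) (hMbar : 0 < Mbar) (k : ℕ) (hk : Tmem S.h (k + 1))
    (hM : S.M k = Mbar ∨ S.M k = a * Mbar) : S.M (k + 1) = Mbar := by
  rw [S.M_rec_T _ hk, Nat.add_sub_cancel]
  apply max_eq_right
  have ha0 : 0 < a := by linarith
  rw [inv_mul_le_iff₀ ha0]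
  rcases hM with h | h <;> rw [h]
  nlinarith

end ADM

theorem condD.step {δ D : ℝ} {x : ℝ → ℝ} {k : ℕ} (hδ : 0 < δ) (h : condD δ D x k) :
    |x ((k + 1 : ℕ) * δ) - x (k * δ)| ≤ D * δ := by
  apply h
  push_cast
  constructor <;> nlinarith

/-- induction step in the proof of Theorem 1 (iii): if `M̄ ≥ 2D`,
`m ∈ T` with `M_m = M̄` and `M_k ∈ {M̄, a M̄}` for all `k ≤ m`, and condition (D) holds
at every index `k ∈ {m−1, …, m+3}`, then there is `m₀ ∈ {m+1, m+2, m+3}` with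
`m₀ ∈ T`, `M_{m₀} = M̄`, `M_k ∈ {M̄, a M̄}` for all `m < k ≤ m₀`, and no index strictly
between `m` and `m₀` belongs to `T`. -/
theorem stmt9 (δ a Mbar M₀ y₀ D : ℝ) (x : ℝ → ℝ)
    (hδ : 0 < δ) (ha : 1 < a) (ha2 : a ≤ 2) (hMbar : 0 < Mbar) (hM₀ : 0 < M₀)
    (hD : 0 < D) (hMD : 2 * D ≤ Mbar)
    (S : ADM δ a Mbar M₀ y₀ x)
    (m : ℕ) (hm : Tmem S.h m) (hMm : S.M m = Mbar)
    (hMall : ∀ k : ℕ, k ≤ m → S.M k = Mbar ∨ S.M k = a * Mbar)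
    (hDcond : ∀ k : ℕ, m - 1 ≤ k → k ≤ m + 3 → condD δ D x k) :
    ∃ m₀ : ℕ, m < m₀ ∧ m₀ ≤ m + 3 ∧ Tmem S.h m₀ ∧ S.M m₀ = Mbar ∧
      (∀ k : ℕ, m < k → k ≤ m₀ → S.M k = Mbar ∨ S.M k = a * Mbar) ∧
      (∀ k : ℕ, m < k → k < m₀ → ¬ Tmem S.h k) := by
  obtain ⟨n, rfl⟩ : ∃ n, m = n + 1 := ⟨m - 1, by have := hm.1; omega⟩
  by_cases h1 : Tmem S.h (n + 1 + 1)
  · refine ⟨n + 1 + 1, by omega, by omega, h1, ?_, ?_, ?_⟩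
    · exact S.M_eq_of_tmem ha hMbar _ h1 (Or.inl hMm)
    · intro k hk hk'
      obtain rfl : k = n + 1 + 1 := by omega
      exact Or.inl (S.M_eq_of_tmem ha hMbar _ h1 (Or.inl hMm))
    · intro k hk hk'; omega
  have M1 : S.M (n + 1 + 1) = Mbar := by
    rw [S.M_rec_prev _ (by omega) h1 hm]; exact hMm
  by_cases h2 : Tmem S.h (n + 1 + 1 + 1)
  · have M2 := S.M_eq_of_tmem ha hMbar _ h2 (Or.inl M1)
    refine ⟨n + 1 + 1 + 1, by omega, by omega, h2, M2, ?_, ?_⟩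
    · intro k hk hk'
      obtain rfl | rfl : k = n + 1 + 1 ∨ k = n + 1 + 1 + 1 := by omega
      exacts [Or.inl M1, Or.inl M2]
    · intro k hk hk'
      obtain rfl : k = n + 1 + 1 := by omega
      exact h1
  have M2 : S.M (n + 1 + 1 + 1) = a * Mbar := by
    rw [S.M_rec_grow _ (by omega) h2 h1, Nat.add_sub_cancel, M1]
  have h3 : Tmem S.h (n + 1 + 1 + 1 + 1) := by
    apply S.flip
    have s0 := S.h_succ_of_tmem _ hm
    have s1 := S.h_succ_of_not_tmem _ h1
    have s2 := S.h_succ_of_not_tmem _ h2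
    have e0 := S.y_rec n
    have e1 := S.y_rec (n + 1)
    have e2 := S.y_rec (n + 1 + 1)
    have e3 := S.y_rec (n + 1 + 1 + 1)
    have d0 := abs_le.mp ((hDcond n (by omega) (by omega)).step hδ)
    have d1 := abs_le.mp ((hDcond (n + 1) (by omega) (by omega)).step hδ)
    have d2 := abs_le.mp ((hDcond (n + 1 + 1) (by omega) (by omega)).step hδ)
    have d3 := abs_le.mp ((hDcond (n + 1 + 1 + 1) (by omega) (by omega)).step hδ)
    have p0 := S.sign_mul_nonneg n
    have hDδ : 2 * D * δ ≤ Mbar * δ := mul_le_mul_of_nonneg_right hMD hδ.le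
    have hMn : S.M n * δ ≤ a * Mbar * δ := by
      apply mul_le_mul_of_nonneg_right _ hδ.le
      rcases hMall n (by omega) with h | h <;> rw [h]
      nlinarith
    rw [s0] at p0 e0
    rw [hMm] at e1
    rw [s1, M1] at e2
    rw [s2, s1, M2] at e3
    rw [s2, s1]
    rcases S.h_pm (n + 1) with hs | hs <;> rw [hs] at p0 e0 e1 e2 e3 ⊢ <;> linarith
  have M3 := S.M_eq_of_tmem ha hMbar _ h3 (Or.inr M2)
  refine ⟨n + 1 + 1 + 1 + 1, by omega, by omega, h3, M3, ?_, ?_⟩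
  · intro k hk hk'
    obtain rfl | rfl | rfl :
        k = n + 1 + 1 ∨ k = n + 1 + 1 + 1 ∨ k = n + 1 + 1 + 1 + 1 := by omega
    exacts [Or.inl M1, Or.inr M2, Or.inl M3]
  · intro k hk hk'
    obtain rfl | rfl : k = n + 1 + 1 ∨ k = n + 1 + 1 + 1 := by omega
    exacts [h1, h2]
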